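/- Let n ≥ 2 be an integer and 0 < ρ < n(n−1)/2, and let z ∈ ℝⁿ have distinct sorted entries z_1 < z_2 < ⋯ < z_n, with mean z̄_n and sample variance s_n². Then z̄_n − inf_{p ∈ P_{ρ,n}} ∑_{i=1}^n p_i z_i ≥ min( √(2ρ s_n²/n), s_n²/(z_n − z̄_n) ). -/

import Mathlib

/-- The χ² uncertainty set `P_{ρ,n}`. -/
def chiSqBall (n : ℕ) (ρ : ℝ) : Set (Fin n → ℝ) :=
  {p | (∀ i, 0 ≤ p i) ∧ (∑ i, p i = 1) ∧ (1/2) * ∑ i, ((n : ℝ) * p i - 1)^2 ≤ ρ}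

/-- Mean of a vector. -/
noncomputable def vecMean {n : ℕ} (z : Fin n → ℝ) : ℝ := (∑ i, z i) / n

/-- Biased sample variance of a vector. -/
noncomputable def vecVar {n : ℕ} (z : Fin n → ℝ) : ℝ := (∑ i, (z i - vecMean z)^2) / n

/-- `OPT = inf_{p ∈ P_{ρ,n}} ∑ p_i z_i`. -/
noncomputable def droOPT (n : ℕ) (ρ : ℝ) (z : Fin n → ℝ) : ℝ :=
  sInf ((fun p => ∑ i, p i * z i) '' chiSqBall n ρ)

/-!
The bound is witnessed by a single feasible weight vector: tilt the uniform weights linearly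
against the centred data, `p i = (1 - t * (z i - m)) / n`, where `m` and `V` are the mean and
variance of `z`. The tilt lowers the mean by exactly `t * V` and has χ²-cost
`∑ i, (n * p i - 1) ^ 2 = t ^ 2 * (n * V)`. So it is feasible for `0 ≤ t` as soon as
`t ≤ √(2 * ρ / (n * V))` (the ball constraint) and `t ≤ 1 / (max z - m)` (nonnegativity), and the
largest such `t` gives the two terms of the minimum.
-/

section Moments

variable {n : ℕ} (z : Fin n → ℝ)

lemma sum_sub_vecMean : ∑ i, (z i - vecMean z) = 0 := by
  rcases eq_or_ne n 0 with rfl | hn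
  · exact Fin.sum_univ_zero _
  · rw [Finset.sum_sub_distrib, Finset.sum_const, Finset.card_fin, nsmul_eq_mul, vecMean,
      mul_div_cancel₀ _ (Nat.cast_ne_zero.mpr hn), sub_self]

lemma sum_sub_vecMean_sq : ∑ i, (z i - vecMean z) ^ 2 = n * vecVar z := by
  rcases eq_or_ne n 0 with rfl | hn
  · simp
  · rw [vecVar, mul_div_cancel₀ _ (Nat.cast_ne_zero.mpr hn)]

lemma sum_sub_vecMean_mul : ∑ i, (z i - vecMean z) * z i = n * vecVar z := by
  calc ∑ i, (z i - vecMean z) * z i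
      = ∑ i, (z i - vecMean z) ^ 2 + (∑ i, (z i - vecMean z)) * vecMean z := by
        rw [Finset.sum_mul, ← Finset.sum_add_distrib]
        exact Finset.sum_congr rfl fun i _ => by ring
    _ = n * vecVar z := by rw [sum_sub_vecMean, sum_sub_vecMean_sq, zero_mul, add_zero]

lemma vecVar_nonneg : 0 ≤ vecVar z :=
  div_nonneg (Finset.sum_nonneg fun _ _ => sq_nonneg _) n.cast_nonneg

variable {z}

lemma vecMean_lt {M : ℝ} (hle : ∀ i, z i ≤ M) (hlt : ∃ i, z i < M) : vecMean z < M := by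
  obtain ⟨i, hi⟩ := hlt
  have hsum : ∑ i, z i < ∑ _i : Fin n, M :=
    Finset.sum_lt_sum (fun k _ => hle k) ⟨i, Finset.mem_univ i, hi⟩
  rw [vecMean, div_lt_iff₀' (Nat.cast_pos.mpr i.pos)]
  simpa only [Finset.sum_const, Finset.card_fin, nsmul_eq_mul] using hsum

end Moments

section RobustValue

variable {n : ℕ} {ρ : ℝ}

lemma chiSqBall_subset_stdSimplex : chiSqBall n ρ ⊆ stdSimplex ℝ (Fin n) :=
  fun _ hp => ⟨hp.1, hp.2.1⟩

lemma bddBelow_image_chiSqBall (z : Fin n → ℝ) :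
    BddBelow ((fun p => ∑ i, p i * z i) '' chiSqBall n ρ) :=
  ((isCompact_stdSimplex ℝ (Fin n)).bddBelow_image (by fun_prop)).mono
    (Set.image_mono chiSqBall_subset_stdSimplex)

lemma droOPT_le {p : Fin n → ℝ} (hp : p ∈ chiSqBall n ρ) (z : Fin n → ℝ) :
    droOPT n ρ z ≤ ∑ i, p i * z i :=
  csInf_le (bddBelow_image_chiSqBall z) (Set.mem_image_of_mem _ hp)

end RobustValue

section TiltedWeights

variable {n : ℕ}

/-- The uniform weights on `n` points tilted linearly, with slope `t`, against the centred data `z`.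
They sum to `1`, but are nonnegative only for small `t`. -/
noncomputable def tiltedWeights (z : Fin n → ℝ) (t : ℝ) : Fin n → ℝ :=
  fun i => (1 - t * (z i - vecMean z)) / n

variable {z : Fin n → ℝ} {t ρ : ℝ}

lemma tiltedWeights_nonneg {i : Fin n} (h : t * (z i - vecMean z) ≤ 1) :
    0 ≤ tiltedWeights z t i :=
  div_nonneg (sub_nonneg.mpr h) n.cast_nonneg

variable (z t)

lemma sum_tiltedWeights [NeZero n] : ∑ i, tiltedWeights z t i = 1 := by
  simp only [tiltedWeights]
  rw [← Finset.sum_div, Finset.sum_sub_distrib, ← Finset.mul_sum, sum_sub_vecMean, mul_zero,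
    sub_zero, Finset.sum_const, Finset.card_fin, nsmul_one, div_self (NeZero.ne _)]

lemma natCast_mul_tiltedWeights (i : Fin n) :
    n * tiltedWeights z t i = 1 - t * (z i - vecMean z) :=
  mul_div_cancel₀ _ (Nat.cast_ne_zero.mpr i.pos.ne')

lemma sum_natCast_mul_tiltedWeights_sub_one_sq :
    ∑ i, (n * tiltedWeights z t i - 1) ^ 2 = t ^ 2 * (n * vecVar z) := by
  calc ∑ i, (n * tiltedWeights z t i - 1) ^ 2
      = t ^ 2 * ∑ i, (z i - vecMean z) ^ 2 := by
        rw [Finset.mul_sum]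
        exact Finset.sum_congr rfl fun i _ => by rw [natCast_mul_tiltedWeights]; ring
    _ = t ^ 2 * (n * vecVar z) := by rw [sum_sub_vecMean_sq]

lemma sum_tiltedWeights_mul [NeZero n] :
    ∑ i, tiltedWeights z t i * z i = vecMean z - t * vecVar z := by
  calc ∑ i, tiltedWeights z t i * z i
      = (∑ i, z i - t * ∑ i, (z i - vecMean z) * z i) / n := by
        rw [Finset.mul_sum, ← Finset.sum_sub_distrib, Finset.sum_div]
        exact Finset.sum_congr rfl fun i _ => by rw [tiltedWeights]; ring
    _ = vecMean z - t * vecVar z := by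
        rw [sum_sub_vecMean_mul, sub_div, vecMean, mul_left_comm,
          mul_div_cancel_left₀ _ (NeZero.ne _)]

variable {z t}

lemma tiltedWeights_mem_chiSqBall [NeZero n] (hnonneg : ∀ i, t * (z i - vecMean z) ≤ 1)
    (hball : t ^ 2 * (n * vecVar z) ≤ 2 * ρ) : tiltedWeights z t ∈ chiSqBall n ρ := by
  refine ⟨fun i => tiltedWeights_nonneg (hnonneg i), sum_tiltedWeights z t, ?_⟩
  rw [sum_natCast_mul_tiltedWeights_sub_one_sq]
  linarith

lemma mul_vecVar_le_vecMean_sub_droOPT [NeZero n] (hnonneg : ∀ i, t * (z i - vecMean z) ≤ 1)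
    (hball : t ^ 2 * (n * vecVar z) ≤ 2 * ρ) : t * vecVar z ≤ vecMean z - droOPT n ρ z := by
  have hopt := droOPT_le (tiltedWeights_mem_chiSqBall hnonneg hball) z
  rw [sum_tiltedWeights_mul] at hopt
  linarith

end TiltedWeights

lemma sq_mul_le_of_le_sqrt_div {a b t : ℝ} (ha : 0 ≤ a) (hb : 0 ≤ b) (ht : 0 ≤ t)
    (h : t ≤ √(a / b)) : t ^ 2 * b ≤ a :=
  mul_le_of_le_div₀ ha hb ((Real.le_sqrt ht (div_nonneg ha hb)).mp h)

lemma sqrt_div_mul_mul_self {a b v : ℝ} (hv : 0 ≤ v) : √(a / (b * v)) * v = √(a * v / b) := by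
  rcases hv.eq_or_lt with rfl | hv
  · simp
  · nth_rw 2 [← Real.sqrt_sq hv.le]
    rw [← Real.sqrt_mul' _ (sq_nonneg v)]
    congr 1
    field_simp

theorem stmt4_general {n : ℕ} {ρ : ℝ} (hρ : 0 ≤ ρ) (z : Fin n → ℝ) (j : Fin n)
    (hle : ∀ i, z i ≤ z j) (hlt : ∃ i, z i < z j) :
    min √(2 * ρ * vecVar z / n) (vecVar z / (z j - vecMean z)) ≤ vecMean z - droOPT n ρ z := by
  have : NeZero n := ⟨j.pos.ne'⟩
  have hV := vecVar_nonneg z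
  have hgap : 0 < z j - vecMean z := sub_pos.mpr (vecMean_lt hle hlt)
  set t := min √(2 * ρ / (n * vecVar z)) (1 / (z j - vecMean z)) with ht
  have ht0 : 0 ≤ t := le_min (Real.sqrt_nonneg _) (one_div_nonneg.mpr hgap.le)
  have hnonneg : ∀ i, t * (z i - vecMean z) ≤ 1 := fun i =>
    calc t * (z i - vecMean z) ≤ t * (z j - vecMean z) := by gcongr; exact hle i
      _ ≤ 1 := (le_div_iff₀ hgap).mp (min_le_right _ _)
  have hball : t ^ 2 * (n * vecVar z) ≤ 2 * ρ :=
    sq_mul_le_of_le_sqrt_div (by positivity) (by positivity) ht0 (min_le_left _ _)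
  calc min √(2 * ρ * vecVar z / n) (vecVar z / (z j - vecMean z))
      = t * vecVar z := by
        rw [ht, min_mul_of_nonneg _ _ hV, sqrt_div_mul_mul_self hV, one_div_mul_eq_div]
    _ ≤ vecMean z - droOPT n ρ z := mul_vecVar_le_vecMean_sub_droOPT hnonneg hball

theorem stmt4 (n : ℕ) (hn : 2 ≤ n) (ρ : ℝ) (hρ0 : 0 < ρ)
    (hρ : ρ < (n : ℝ) * ((n : ℝ) - 1) / 2)
    (z : Fin n → ℝ) (hz : StrictMono z) :
    min (Real.sqrt (2 * ρ * vecVar z / n)) (vecVar z / (z ⟨n - 1, by omega⟩ - vecMean z))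
      ≤ vecMean z - droOPT n ρ z := by
  have hle (i : Fin n) : z i ≤ z ⟨n - 1, by omega⟩ := hz.monotone (Nat.le_sub_one_of_lt i.isLt)
  exact stmt4_general hρ0.le z _ hle ⟨⟨0, by omega⟩, hz (Fin.mk_lt_mk.mpr (by omega))⟩
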